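/- Let n ≥ 1. Then ∑_{d|n} c_d(n/d) equals m if n = m² is a perfect square (with m ≥ 1), and equals 0 if n is not a perfect square. -/

import Mathlib

/-- The Ramanujan sum `c_d(r)`: the sum of the `r`-th powers of all primitive
`d`-th roots of unity. -/
noncomputable def ramanujanSum (d r : ℕ) : ℂ :=
  ∑ m ∈ (Finset.range d).filter (fun m => Nat.gcd m d = 1),
    Complex.exp (2 * Real.pi * Complex.I * ((m : ℂ) * (r : ℂ) / (d : ℂ)))

/-!
Put `S n = ∑ d ∣ n, c_d (n / d)` and let `s n` be `√n` if `n` is a square and `0` otherwise.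
The primitive `d`-th roots of unity with `d ∣ b` are together all the `b`-th roots of unity, so
`∑ d ∣ b, c_d r` is `b` if `b ∣ r` and `0` otherwise. Writing `e = d k` and `b = n / k`,
`∑ e ∣ n, S e = ∑ b ∣ n, ∑ d ∣ b, c_d (n / b)`
is therefore the sum of all `b` with `b ^ 2 ∣ n`, which is also `∑ e ∣ n, s e`. By Möbius
inversion `S = s`.
-/

section DivisorSums

theorem sum_divisors_sum_divisors_div {M : Type*} [AddCommMonoid M] (F : ℕ → ℕ → M) (n : ℕ) :
    ∑ e ∈ n.divisors, ∑ d ∈ e.divisors, F d (e / d) =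
      ∑ b ∈ n.divisors, ∑ d ∈ b.divisors, F d (n / b) := by
  -- With `e = d k` and `n = d k l`, this involution exchanges `k` and `l`.
  let swap : (Σ _ : ℕ, ℕ) → Σ _ : ℕ, ℕ := fun p ↦ ⟨n / (p.1 / p.2), p.2⟩
  have swap_spec : ∀ p ∈ n.divisors.sigma fun e ↦ e.divisors,
      swap p ∈ n.divisors.sigma (fun b ↦ b.divisors) ∧ swap (swap p) = p ∧
        p.1 / p.2 = n / (swap p).1 := by
    rintro ⟨e, d⟩ hp
    simp only [Finset.mem_sigma, Nat.mem_divisors] at hp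
    obtain ⟨⟨⟨l, rfl⟩, hn⟩, ⟨k, rfl⟩, -⟩ := hp
    obtain ⟨⟨hd, hk⟩, hl⟩ : (d ≠ 0 ∧ k ≠ 0) ∧ l ≠ 0 := by simpa [not_or] using hn
    have h_quot : d * k / d = k := Nat.mul_div_cancel_left k hd.bot_lt
    have h_swap : swap ⟨d * k, d⟩ = ⟨d * l, d⟩ := by
      simp only [swap, h_quot, mul_right_comm d k l, Nat.mul_div_cancel _ hk.bot_lt]
    have h_swap_swap : swap ⟨d * l, d⟩ = ⟨d * k, d⟩ := by
      simp only [swap, Nat.mul_div_cancel_left l hd.bot_lt, Nat.mul_div_cancel _ hl.bot_lt]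
    rw [h_swap, h_swap_swap]
    refine ⟨?_, rfl, ?_⟩
    · simp [hd, hk, hl, mul_right_comm d k l]
    · rw [h_quot, mul_right_comm, Nat.mul_div_cancel_left k (by positivity)]
  rw [Finset.sum_sigma', Finset.sum_sigma']
  exact Finset.sum_nbij' swap swap (fun p hp ↦ (swap_spec p hp).1) (fun p hp ↦ (swap_spec p hp).1)
    (fun p hp ↦ (swap_spec p hp).2.1) (fun p hp ↦ (swap_spec p hp).2.1)
    fun p hp ↦ congrArg (F p.2) (swap_spec p hp).2.2

theorem sum_divisors_ite_isSquare {M : Type*} [AddCommMonoid M] (f : ℕ → M) (n : ℕ) :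
    ∑ e ∈ n.divisors, (if IsSquare e then f e.sqrt else 0) =
      ∑ b ∈ n.divisors, if b ∣ n / b then f b else 0 := by
  rw [← Finset.sum_filter, ← Finset.sum_filter]
  refine Finset.sum_nbij' Nat.sqrt (fun b ↦ b * b) ?_ ?_ ?_ ?_ fun _ _ ↦ rfl
  · intro e he
    simp only [Finset.mem_filter, Nat.mem_divisors] at he ⊢
    obtain ⟨⟨h_dvd, hn⟩, b, rfl⟩ := he
    have hb : b ∣ n := dvd_of_mul_left_dvd h_dvd
    rw [Nat.sqrt_eq]
    exact ⟨⟨hb, hn⟩, (Nat.dvd_div_iff_mul_dvd hb).2 h_dvd⟩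
  · intro b hb
    simp only [Finset.mem_filter, Nat.mem_divisors] at hb ⊢
    exact ⟨⟨(Nat.dvd_div_iff_mul_dvd hb.1.1).1 hb.2, hb.1.2⟩, b, rfl⟩
  · intro e he
    obtain ⟨b, rfl⟩ := (Finset.mem_filter.1 he).2
    rw [Nat.sqrt_eq]
  · exact fun b _ ↦ Nat.sqrt_eq b

theorem eq_of_forall_sum_divisors_eq {A : Type*} [AddCommGroup A] {f g : ℕ → A}
    (h : ∀ n > 0, ∑ d ∈ n.divisors, f d = ∑ d ∈ n.divisors, g d) {n : ℕ} (hn : 0 < n) :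
    f n = g n := by
  rw [← ArithmeticFunction.sum_eq_iff_sum_smul_moebius_eq.1 h n hn]
  exact ArithmeticFunction.sum_eq_iff_sum_smul_moebius_eq.1 (fun _ _ ↦ rfl) n hn

end DivisorSums

section RootsOfUnity

variable {R : Type*} [CommRing R] [IsDomain R] {ζ : R} {n : ℕ}

theorem sum_nthRootsFinset_one_eq_sum_range {M : Type*} [AddCommMonoid M]
    (hζ : IsPrimitiveRoot ζ n) (f : R → M) :
    ∑ z ∈ Polynomial.nthRootsFinset n (1 : R), f z = ∑ i ∈ Finset.range n, f (ζ ^ i) := by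
  obtain rfl | hn := n.eq_zero_or_pos
  · simp
  symm
  refine Finset.sum_nbij (ζ ^ ·) ?_ ?_ ?_ fun _ _ ↦ rfl
  · intro i _
    rw [Polynomial.mem_nthRootsFinset hn, pow_right_comm, hζ.pow_eq_one, one_pow]
  · exact hζ.injOn_pow
  · intro z hz
    rw [Finset.mem_coe, Polynomial.mem_nthRootsFinset hn] at hz
    have : NeZero n := ⟨hn.ne'⟩
    obtain ⟨i, hi, rfl⟩ := hζ.eq_pow_of_pow_eq_one hz
    exact ⟨i, Finset.mem_coe.2 (Finset.mem_range.2 hi), rfl⟩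

theorem sum_nthRootsFinset_one_pow (hζ : IsPrimitiveRoot ζ n) (r : ℕ) :
    ∑ z ∈ Polynomial.nthRootsFinset n (1 : R), z ^ r = if n ∣ r then (n : R) else 0 := by
  rw [sum_nthRootsFinset_one_eq_sum_range hζ]
  simp only [pow_right_comm ζ _ r]
  split_ifs with h
  · simp [(hζ.pow_eq_one_iff_dvd r).2 h]
  · have h_ne : 1 - ζ ^ r ≠ 0 := sub_ne_zero_of_ne fun h' ↦ h ((hζ.pow_eq_one_iff_dvd r).1 h'.symm)
    refine (mul_eq_zero.1 ?_).resolve_left h_ne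
    rw [mul_neg_geom_sum, pow_right_comm, hζ.pow_eq_one, one_pow, sub_self]

theorem sum_primitiveRoots_eq_sum_range {M : Type*} [AddCommMonoid M]
    (hζ : IsPrimitiveRoot ζ n) (f : R → M) :
    ∑ z ∈ primitiveRoots n R, f z = ∑ m ∈ Finset.range n with m.gcd n = 1, f (ζ ^ m) := by
  obtain rfl | hn := n.eq_zero_or_pos
  · simp
  have : NeZero n := ⟨hn.ne'⟩
  symm
  refine Finset.sum_nbij (ζ ^ ·) ?_ ?_ ?_ fun _ _ ↦ rfl
  · intro m hm
    exact (mem_primitiveRoots hn).2 (hζ.pow_of_coprime m (Finset.mem_filter.1 hm).2)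
  · exact hζ.injOn_pow.mono fun m hm ↦ (Finset.mem_filter.1 hm).1
  · intro z hz
    rw [Finset.mem_coe, mem_primitiveRoots hn, hζ.isPrimitiveRoot_iff] at hz
    obtain ⟨m, hm, h_coprime, rfl⟩ := hz
    exact ⟨m, Finset.mem_filter.2 ⟨Finset.mem_range.2 hm, h_coprime⟩, rfl⟩

theorem sum_divisors_sum_primitiveRoots {M : Type*} [AddCommMonoid M] (f : R → M) (n : ℕ) :
    ∑ d ∈ n.divisors, ∑ z ∈ primitiveRoots d R, f z =
      ∑ z ∈ Polynomial.nthRootsFinset n (1 : R), f z := by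
  classical
  rw [IsPrimitiveRoot.nthRoots_one_eq_biUnion_primitiveRoots,
    Finset.sum_biUnion fun _ _ _ _ hab ↦ IsPrimitiveRoot.disjoint hab]

end RootsOfUnity

theorem ramanujanSum_eq_sum_primitiveRoots (d r : ℕ) :
    ramanujanSum d r = ∑ z ∈ primitiveRoots d ℂ, z ^ r := by
  obtain rfl | hd := eq_or_ne d 0
  · simp [ramanujanSum]
  rw [sum_primitiveRoots_eq_sum_range (Complex.isPrimitiveRoot_exp d hd)]
  refine Finset.sum_congr rfl fun m _ ↦ ?_
  rw [← Complex.exp_nat_mul, ← Complex.exp_nat_mul]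
  ring_nf

theorem sum_divisors_ramanujanSum (n r : ℕ) :
    ∑ d ∈ n.divisors, ramanujanSum d r = if n ∣ r then (n : ℂ) else 0 := by
  obtain rfl | hn := eq_or_ne n 0
  · simp
  simp only [ramanujanSum_eq_sum_primitiveRoots]
  rw [sum_divisors_sum_primitiveRoots,
    sum_nthRootsFinset_one_pow (Complex.isPrimitiveRoot_exp n hn)]

theorem sum_divisors_ramanujanSum_div {n : ℕ} (hn : 0 < n) :
    ∑ d ∈ n.divisors, ramanujanSum d (n / d) = if IsSquare n then (n.sqrt : ℂ) else 0 := by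
  refine eq_of_forall_sum_divisors_eq
    (f := fun e ↦ ∑ d ∈ e.divisors, ramanujanSum d (e / d))
    (g := fun e ↦ if IsSquare e then (e.sqrt : ℂ) else 0) (fun N _ ↦ ?_) hn
  calc ∑ e ∈ N.divisors, ∑ d ∈ e.divisors, ramanujanSum d (e / d)
    _ = ∑ b ∈ N.divisors, ∑ d ∈ b.divisors, ramanujanSum d (N / b) :=
      sum_divisors_sum_divisors_div ramanujanSum N
    _ = ∑ b ∈ N.divisors, if b ∣ N / b then (b : ℂ) else 0 := by
      simp only [sum_divisors_ramanujanSum]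
    _ = ∑ e ∈ N.divisors, if IsSquare e then (e.sqrt : ℂ) else 0 :=
      (sum_divisors_ite_isSquare (fun b ↦ (b : ℂ)) N).symm

theorem stmt_8 (n : ℕ) (hn : 1 ≤ n) :
    (∀ m : ℕ, 1 ≤ m → n = m ^ 2 →
      ∑ d ∈ n.divisors, ramanujanSum d (n / d) = (m : ℂ)) ∧
    ((¬ ∃ m : ℕ, n = m ^ 2) →
      ∑ d ∈ n.divisors, ramanujanSum d (n / d) = 0) := by
  rw [sum_divisors_ramanujanSum_div hn]
  constructor
  · rintro m - rfl
    rw [if_pos (IsSquare.sq m), Nat.sqrt_eq']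
  · intro h_not_sq
    rw [if_neg (mt (isSquare_iff_exists_sq n).1 h_not_sq)]
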